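/- arXiv:1412.0232 — 2 statements merged into one kernel-verified Lean document; each statement's English description precedes it below -/
import Mathlib

section
/- Let k be a field, m ≥ 2 a natural number, and A = k[t]/(t^m) the truncated polynomial k-algebra. Regard k as an A-module via the augmentation A → k sending t to 0. Then for every natural number n, the Ext group Ext^n_A(k, k), computed in the abelian category of A-modules, is a one-dimensional k-vector space. -/
open Polynomial CategoryTheory

namespace TruncExt

section General

variable {k : Type} [Field k] {A : Type} [CommRing A] [Algebra k A]

/-- Multiplication by `a` on the regular module. -/
noncomputable def mulHom (a : A) : ModuleCat.of A A ⟶ ModuleCat.of A A :=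
  ModuleCat.ofHom (LinearMap.mulLeft A a)

lemma mulHom_comp {a b : A} (h : a * b = 0) : mulHom a ≫ mulHom b = 0 := by
  ext
  simp [mulHom, mul_comm, h]

/-- The periodic complex `⋯ → A →^s A →^t A → 0`. -/
noncomputable def cpx {t s : A} (h : s * t = 0) : ChainComplex (ModuleCat.{0} A) ℕ :=
  HomologicalComplex.alternatingConst (ModuleCat.of A A) (φ := mulHom s) (ψ := mulHom t)
    (mulHom_comp h) (mulHom_comp (by rw [mul_comm, h]))
    (fun _ _ => ComplexShape.down_nat_odd_add)

lemma cpx_d_cases {t s : A} (h : s * t = 0) (i j : ℕ) :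
    (cpx h).d i j = 0 ∨ (cpx h).d i j = mulHom s ∨ (cpx h).d i j = mulHom t := by
  by_cases hij : (ComplexShape.down ℕ).Rel i j
  · by_cases hi : Even i
    · exact Or.inr (Or.inl ((dif_pos hij).trans (dif_pos hi)))
    · exact Or.inr (Or.inr ((dif_pos hij).trans (dif_neg hi)))
  · exact Or.inl (dif_neg hij)

lemma cpx_d_even {t s : A} (h : s * t = 0) (j : ℕ) (hj : Even (j + 1)) :
    (cpx h).d (j + 1) j = mulHom s := by
  exact (dif_pos rfl).trans (dif_pos hj)

lemma cpx_d_odd {t s : A} (h : s * t = 0) (j : ℕ) (hj : ¬ Even (j + 1)) :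
    (cpx h).d (j + 1) j = mulHom t := by
  exact (dif_pos rfl).trans (dif_neg hj)

lemma cpx_d_one {t s : A} (h : s * t = 0) : (cpx h).d 1 0 = mulHom t :=
  cpx_d_odd h 0 (by decide)

/-- The augmentation of the periodic complex. -/
noncomputable def cpxπ {t s : A} (h : s * t = 0) (M : ModuleCat.{0} A)
    (p : ModuleCat.of A A ⟶ M) (hp : mulHom t ≫ p = 0) :
    cpx h ⟶ (ChainComplex.single₀ (ModuleCat.{0} A)).obj M :=
  ((cpx h).toSingle₀Equiv M).symm ⟨p, by rw [cpx_d_one]; exact hp⟩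

lemma cpxπ_f {t s : A} (h : s * t = 0) (M : ModuleCat.{0} A)
    (p : ModuleCat.of A A ⟶ M) (hp : mulHom t ≫ p = 0) :
    (cpxπ h M p hp).f 0 = p :=
  ChainComplex.toSingle₀Equiv_symm_apply_f_zero _ _

lemma cpxπ_quasiIso {t s : A} (h : s * t = 0) (M : ModuleCat.{0} A)
    (p : ModuleCat.of A A ⟶ M) (hp : mulHom t ≫ p = 0)
    (hsurj : Function.Surjective p.hom)
    (hker : LinearMap.range (mulHom t).hom = LinearMap.ker p.hom)
    (hst : LinearMap.range (mulHom s).hom = LinearMap.ker (mulHom t).hom)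
    (hts : LinearMap.range (mulHom t).hom = LinearMap.ker (mulHom s).hom) :
    QuasiIso (cpxπ h M p hp) where
  quasiIsoAt m := by
    induction m with
    | zero =>
      rw [ChainComplex.quasiIsoAt₀_iff, ShortComplex.quasiIso_iff_of_zeros' _ rfl rfl rfl]
      constructor
      · refine (ShortComplex.moduleCat_exact_iff_range_eq_ker _).2 ?_
        change LinearMap.range ((cpx h).d 1 0).hom = LinearMap.ker ((cpxπ h M p hp).f 0).hom
        rw [cpxπ_f, cpx_d_one]
        exact hker
      · refine (ModuleCat.epi_iff_surjective _).2 ?_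
        change Function.Surjective ((cpxπ h M p hp).f 0).hom
        rw [cpxπ_f]
        exact hsurj
    | succ m _ =>
      rw [quasiIsoAt_iff_exactAt' (hL := ChainComplex.exactAt_succ_single_obj ..),
          HomologicalComplex.exactAt_iff' _ (m + 2) (m + 1) m (by simp) (by simp)]
      refine (ShortComplex.moduleCat_exact_iff_range_eq_ker _).2 ?_
      change LinearMap.range ((cpx h).d (m + 2) (m + 1)).hom =
        LinearMap.ker ((cpx h).d (m + 1) m).hom
      by_cases hm : Even (m + 1)
      · rw [cpx_d_even h m hm, cpx_d_odd h (m + 1) (by simpa [Nat.even_add_one] using hm)]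
        exact hts
      · rw [cpx_d_odd h m hm, cpx_d_even h (m + 1) (Nat.even_add_one.2 hm)]
        exact hst

/-- The periodic projective resolution. -/
noncomputable def res {t s : A} (h : s * t = 0) (M : ModuleCat.{0} A)
    (p : ModuleCat.of A A ⟶ M) (hp : mulHom t ≫ p = 0)
    (hsurj : Function.Surjective p.hom)
    (hker : LinearMap.range (mulHom t).hom = LinearMap.ker p.hom)
    (hst : LinearMap.range (mulHom s).hom = LinearMap.ker (mulHom t).hom)
    (hts : LinearMap.range (mulHom t).hom = LinearMap.ker (mulHom s).hom) :
    ProjectiveResolution M where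
  complex := cpx h
  projective _ := ModuleCat.projective_of_free (Module.Basis.singleton Unit A)
  π := cpxπ h M p hp
  quasiIso := cpxπ_quasiIso h M p hp hsurj hker hst hts

lemma mulHom_comp_eq_zero {a : A} {M : ModuleCat.{0} A} (ha : ∀ x : M, a • x = 0)
    (f : ModuleCat.of A A ⟶ M) : mulHom a ≫ f = 0 := by
  ext
  have : f.hom (a • (1 : A)) = a • f.hom (1 : A) := map_smul _ _ _
  rw [ha] at this
  simpa [mulHom] using this

lemma linYoneda_d_zero {t s : A} (h : s * t = 0) (M : ModuleCat.{0} A)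
    (hs : ∀ x : M, s • x = 0) (ht : ∀ x : M, t • x = 0) (i j : ℕ) :
    ((cpx h).linearYonedaObj k M).d i j = 0 := by
  have key : ∀ f : ModuleCat.of A A ⟶ M, (cpx h).d j i ≫ f = 0 := by
    intro f
    rcases cpx_d_cases h j i with h1 | h1 | h1 <;> rw [h1]
    · exact Limits.zero_comp
    · exact mulHom_comp_eq_zero hs f
    · exact mulHom_comp_eq_zero ht f
  ext f
  exact key f

theorem ext_iso {t s : A} (h : s * t = 0) (M : ModuleCat.{0} A)
    (p : ModuleCat.of A A ⟶ M) (hp : mulHom t ≫ p = 0)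
    (hsurj : Function.Surjective p.hom)
    (hker : LinearMap.range (mulHom t).hom = LinearMap.ker p.hom)
    (hst : LinearMap.range (mulHom s).hom = LinearMap.ker (mulHom t).hom)
    (hts : LinearMap.range (mulHom t).hom = LinearMap.ker (mulHom s).hom)
    (hs : ∀ x : M, s • x = 0) (ht : ∀ x : M, t • x = 0) (n : ℕ) :
    Nonempty (((Ext k (ModuleCat.{0} A) n).obj (Opposite.op M)).obj M ≅
      ModuleCat.of k (ModuleCat.of A A ⟶ M)) :=
  ⟨(res h M p hp hsurj hker hst hts).isoExt n M ≪≫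
    (ShortComplex.HomologyData.ofZeros (((cpx h).linearYonedaObj k M).sc n)
      (linYoneda_d_zero h M hs ht _ _) (linYoneda_d_zero h M hs ht _ _)).left.homologyIso⟩

/-- Evaluation at `1` is a `k`-linear equivalence. -/
noncomputable def evalEquiv [Module A k] (hk : ∀ (c x : k), algebraMap k A c • x = c * x) :
    (ModuleCat.of A A ⟶ ModuleCat.of A k) ≃ₗ[k] k where
  toFun f := f.hom (1 : A)
  invFun c := ModuleCat.ofHom (LinearMap.toSpanSingleton A k c)
  map_add' _ _ := rfl
  map_smul' c f := hk c _
  left_inv f := by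
    ext
    exact one_smul A _
  right_inv c := one_smul A c

theorem finrank_ext [Module A k] (hk : ∀ (c x : k), algebraMap k A c • x = c * x)
    {t s : A} (h : s * t = 0)
    (hker : ∀ x : A, x • (1 : k) = 0 → ∃ y, t * y = x)
    (hst : LinearMap.range (mulHom s).hom = LinearMap.ker (mulHom t).hom)
    (hts : LinearMap.range (mulHom t).hom = LinearMap.ker (mulHom s).hom)
    (hs : ∀ x : k, s • x = 0) (ht : ∀ x : k, t • x = 0) (n : ℕ) :
    Module.finrank k (((Ext k (ModuleCat.{0} A) n).obj
      (Opposite.op (ModuleCat.of A k))).obj (ModuleCat.of A k)) = 1 := by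
  let p : ModuleCat.of A A ⟶ ModuleCat.of A k :=
    ModuleCat.ofHom (LinearMap.toSpanSingleton A k (1 : k))
  have hker' : LinearMap.range (mulHom t).hom = LinearMap.ker p.hom := by
    ext x
    constructor
    · rintro ⟨y, rfl⟩
      change (t * y) • (1 : k) = 0
      rw [mul_smul, ht]
    · exact hker x
  have hsurj : Function.Surjective p.hom := fun c => ⟨algebraMap k A c, by
    change algebraMap k A c • (1 : k) = c
    rw [hk, mul_one]⟩
  obtain ⟨e⟩ := ext_iso (k := k) h (ModuleCat.of A k) p
    (mulHom_comp_eq_zero ht p) hsurj hker' hst hts hs ht n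
  exact e.toLinearEquiv.finrank_eq.trans
    ((evalEquiv hk).finrank_eq.trans (Module.finrank_self k))

end General

section Trunc

variable (k : Type) [Field k] (m : ℕ)

/-- The truncated polynomial ring. -/
abbrev Tr := Polynomial k ⧸ Ideal.span {(X : Polynomial k) ^ m}

lemma mul_ker (a b : ℕ) (hab : a + b = m) (x : Tr k m)
    (hx : Ideal.Quotient.mk _ (X ^ a) * x = 0) :
    ∃ y, Ideal.Quotient.mk _ (X ^ b) * y = x := by
  obtain ⟨f, rfl⟩ := Ideal.Quotient.mk_surjective x
  rw [← map_mul, Ideal.Quotient.eq_zero_iff_mem, Ideal.mem_span_singleton, ← hab, pow_add] at hx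
  obtain ⟨g, rfl⟩ := (mul_dvd_mul_iff_left (pow_ne_zero a X_ne_zero)).1 hx
  exact ⟨Ideal.Quotient.mk _ g, by rw [map_mul]⟩

lemma range_eq_ker (a b : ℕ) (hab : a + b = m) :
    LinearMap.range (mulHom (Ideal.Quotient.mk _ (X ^ b) : Tr k m)).hom =
    LinearMap.ker (mulHom (Ideal.Quotient.mk _ (X ^ a) : Tr k m)).hom := by
  ext x
  constructor
  · rintro ⟨y, rfl⟩
    have : (Ideal.Quotient.mk _ (X ^ a) : Tr k m) * Ideal.Quotient.mk _ (X ^ b) = 0 := by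
      rw [← map_mul, ← pow_add, hab, Ideal.Quotient.eq_zero_iff_mem]
      exact Ideal.mem_span_singleton_self _
    change (Ideal.Quotient.mk _ (X ^ a) : Tr k m) * (Ideal.Quotient.mk _ (X ^ b) * y) = 0
    rw [← mul_assoc, this, zero_mul]
  · intro hx
    exact mul_ker k m a b hab x hx

end Trunc

end TruncExt

/-- For `A = k[t]/(t^m)` with `m ≥ 2` and `k` viewed as an `A`-module via the
augmentation `t ↦ 0`, the Ext group `Ext^n_A(k, k)` in the abelian category of
`A`-modules is a one-dimensional `k`-vector space for every `n`. -/
theorem ext_truncated_polynomial_one_dimensional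
    (k : Type) [Field k] (m : ℕ) (hm : 2 ≤ m) (n : ℕ) :
    letI A := Polynomial k ⧸ Ideal.span {(X : Polynomial k) ^ m}
    letI φ : A →+* k := Ideal.Quotient.lift (Ideal.span {(X : Polynomial k) ^ m})
      (Polynomial.evalRingHom (0 : k))
      (fun a ha => by
        refine (Ideal.span_le.mpr ?_ : _ ≤ RingHom.ker (Polynomial.evalRingHom (0 : k))) ha
        rintro x hx
        rw [Set.mem_singleton_iff] at hx
        subst hx
        simp [RingHom.mem_ker, zero_pow, show m ≠ 0 by omega])
    letI : Module A k := Module.compHom k φ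
    Module.finrank k
      (((Ext k (ModuleCat A) n).obj (Opposite.op (ModuleCat.of A k))).obj
        (ModuleCat.of A k)) = 1 := by
  let φ : (Polynomial k ⧸ Ideal.span {(X : Polynomial k) ^ m}) →+* k :=
    Ideal.Quotient.lift (Ideal.span {(X : Polynomial k) ^ m})
      (Polynomial.evalRingHom (0 : k))
      (fun a ha => by
        refine (Ideal.span_le.mpr ?_ : _ ≤ RingHom.ker (Polynomial.evalRingHom (0 : k))) ha
        rintro x hx
        rw [Set.mem_singleton_iff] at hx
        subst hx
        simp [RingHom.mem_ker, zero_pow, show m ≠ 0 by omega])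
  let : Module (Polynomial k ⧸ Ideal.span {(X : Polynomial k) ^ m}) k := Module.compHom k φ
  have hφ : ∀ f : k[X], φ (Ideal.Quotient.mk _ f) = f.eval 0 := fun f => rfl
  have hsm : ∀ (a : TruncExt.Tr k m) (x : k), a • x = φ a * x := fun a x => rfl
  let t : TruncExt.Tr k m := Ideal.Quotient.mk _ (X ^ 1)
  let s : TruncExt.Tr k m := Ideal.Quotient.mk _ (X ^ (m - 1))
  have h : s * t = 0 := by
    rw [← map_mul, ← pow_add, Nat.sub_add_cancel (by omega), Ideal.Quotient.eq_zero_iff_mem]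
    exact Ideal.mem_span_singleton_self _
  refine TruncExt.finrank_ext (k := k) (A := TruncExt.Tr k m) (t := t) (s := s)
    ?_ h ?_ (TruncExt.range_eq_ker k m 1 (m - 1) (by omega))
    (TruncExt.range_eq_ker k m (m - 1) 1 (by omega)) ?_ ?_ n
  · intro c x
    change φ (Ideal.Quotient.mk _ (C c)) * x = c * x
    rw [hφ, eval_C]
  · intro x hx
    obtain ⟨f, rfl⟩ := Ideal.Quotient.mk_surjective x
    have hx' : f.eval 0 = 0 := by
      rw [← hφ, ← mul_one (φ _)]; exact hx
    obtain ⟨g, rfl⟩ : X ∣ f := by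
      rw [X_dvd_iff, coeff_zero_eq_eval_zero, hx']
    refine ⟨Ideal.Quotient.mk _ g, ?_⟩
    change Ideal.Quotient.mk _ (X ^ 1) * Ideal.Quotient.mk _ g = _
    rw [← map_mul, pow_one]
  · intro x
    rw [hsm, hφ]; simp [show m - 1 ≠ 0 by omega]
  · intro x
    rw [hsm, hφ]; simp
end

section
/- Let r ≥ 1 be a natural number and let A = F₂[u₁, …, u_r]/(u₁², …, u_r²) be the quotient of the polynomial ring over the field F₂ with two elements by the squares of all variables. Regard F₂ as an A-module via the augmentation sending every u_i to 0. Then for every natural number n, the Ext group Ext^n_A(F₂, F₂), computed in the abelian category of A-modules, is an F₂-vector space of dimension C(n + r − 1, r − 1). -/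
open MvPolynomial CategoryTheory

namespace ExtF2

set_option linter.unusedSectionVars false

section alg
variable {r : ℕ} {A : Type} [CommRing A] [CharP A 2]

/-- Koszul-type differential on all families. -/
def kd (u : Fin r → A) (f : (Fin r → ℕ) → A) (b : Fin r → ℕ) : A :=
  ∑ i, u i * f (b + Pi.single i 1)

/-- Partial homotopy. -/
def kh (D : A →+ A) (i : Fin r) (f : (Fin r → ℕ) → A) (b : Fin r → ℕ) : A :=
  if b i = 0 then 0 else D (f (b - Pi.single i 1))

lemma kd_add (u : Fin r → A) (f g : (Fin r → ℕ) → A) : kd u (f + g) = kd u f + kd u g := by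
  funext b; simp [kd, mul_add, Finset.sum_add_distrib]

lemma kd_zero (u : Fin r → A) : kd u 0 = 0 := by
  funext b; simp [kd]

lemma kh_zero (D : A →+ A) (i : Fin r) : kh D i 0 = 0 := by
  funext b; simp [kh]

lemma kd_kd (u : Fin r → A) (hu : ∀ i, u i * u i = 0) (f : (Fin r → ℕ) → A) :
    kd u (kd u f) = 0 := by
  funext b
  simp only [kd, Finset.mul_sum, Pi.zero_apply]
  rw [← Finset.sum_product']
  refine Finset.sum_involution (fun p _ => (p.2, p.1)) ?_ ?_ ?_ ?_
  · rintro ⟨i, j⟩ _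
    simp only
    rw [add_right_comm b (Pi.single j 1), mul_left_comm (u j)]
    exact CharTwo.add_self_eq_zero _
  · rintro ⟨i, j⟩ _ h e
    simp only [Prod.mk.injEq] at e
    obtain rfl := e.1
    apply h
    simp only
    rw [← mul_assoc, hu, zero_mul]
  · simp
  · simp

lemma kd_kh (u : Fin r → A) (D : A →+ A) (i : Fin r)
    (hD : ∀ j x, D (u j * x) = (if i = j then x else 0) + u j * D x)
    (f : (Fin r → ℕ) → A) (b : Fin r → ℕ) :
    kd u (kh D i f) b + kh D i (kd u f) b = if b i = 0 then u i * D (f b) else f b := by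
  by_cases hb : b i = 0
  · simp only [kd, kh, hb, if_true, add_zero]
    rw [Finset.sum_eq_single i]
    · simp
    · intro j _ hj
      simp [hb, Pi.single_eq_of_ne hj.symm]
    · simp
  · have h1 : ∀ j, b + Pi.single j 1 - Pi.single i 1 = b - Pi.single i 1 + Pi.single j 1 := by
      intro j
      funext k
      simp only [Pi.add_apply, Pi.sub_apply]
      by_cases hk : k = i
      · subst hk; simp; omega
      · simp [Pi.single_eq_of_ne hk]
    have h2 : b - Pi.single i 1 + Pi.single i 1 = b := by
      funext k
      simp only [Pi.add_apply, Pi.sub_apply]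
      by_cases hk : k = i
      · subst hk; simp; omega
      · simp [Pi.single_eq_of_ne hk]
    simp only [kd, kh, hb, if_false, map_sum, hD]
    rw [Finset.sum_add_distrib, Finset.sum_ite_eq]
    simp only [Finset.mem_univ, if_true, h2]
    have h3 : ∀ j, (b + Pi.single j 1 : Fin r → ℕ) i ≠ 0 := by
      intro j; simp [hb]
    simp only [h3, if_false, h1]
    rw [add_left_comm, CharTwo.add_self_eq_zero, add_zero]

lemma kd_exact (u : Fin r → A) (hu : ∀ i, u i * u i = 0) (D : Fin r → A →+ A)
    (hD : ∀ i j x, D i (u j * x) = (if i = j then x else 0) + u j * D i x)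
    (f : (Fin r → ℕ) → A) (hf : kd u f = 0) (h0 : f 0 = 0) : ∃ g, kd u g = f := by
  have key : ∀ s : Finset (Fin r), ∃ g f' : (Fin r → ℕ) → A, kd u g + f' = f ∧ kd u f' = 0 ∧
      (∀ a, f a = 0 → f' a = 0) ∧ ∀ a, (∃ i ∈ s, a i ≠ 0) → f' a = 0 := by
    intro s
    induction s using Finset.induction_on with
    | empty => exact ⟨0, f, by rw [kd_zero, zero_add], hf, fun _ h => h, by simp⟩
    | insert i s his ih =>
      obtain ⟨g, f', h1, h2, h3, h4⟩ := ih
      have H := kd_kh u (D i) i (hD i) f'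
      rw [h2, kh_zero] at H
      simp only [Pi.zero_apply, add_zero] at H
      refine ⟨g + kh (D i) i f', kd u (kh (D i) i f') + f', ?_, ?_, ?_, ?_⟩
      · rw [kd_add, ← h1]
        funext b
        simp only [Pi.add_apply]
        have := CharTwo.add_self_eq_zero (kd u (kh (D i) i f') b)
        linear_combination this
      · rw [kd_add, h2, kd_kd u hu, add_zero]
      · intro a ha
        have := h3 a ha
        simp [H, this]
      · rintro a ⟨j, hj, hja⟩
        rw [Pi.add_apply, H]
        by_cases hi : a i = 0
        · have : j ∈ s := by
            rcases Finset.mem_insert.1 hj with rfl | h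
            · exact absurd hi hja
            · exact h
          simp [h4 a ⟨j, this, hja⟩]
        · rw [if_neg hi]; exact CharTwo.add_self_eq_zero _
  obtain ⟨g, f', h1, h2, h3, h4⟩ := key Finset.univ
  refine ⟨g, ?_⟩
  have : f' = 0 := by
    funext a
    by_cases ha : a = 0
    · subst ha; exact h3 0 h0
    · apply h4
      obtain ⟨i, hi⟩ := Function.ne_iff.1 ha
      exact ⟨i, Finset.mem_univ _, hi⟩
  rw [← h1, this, add_zero]

/-- Multi-indices of degree `n`. -/
abbrev Idx (r n : ℕ) : Type := {a : Fin r → ℕ // ∑ i, a i = n}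

instance (r n : ℕ) : Finite (Idx r n) := by
  have : {a : Fin r → ℕ | ∑ i, a i = n}.Finite := by
    refine (Finset.finite_toSet (Finset.piAntidiag (Finset.univ : Finset (Fin r)) n)).subset ?_
    intro a ha
    simpa using ha
  exact this

lemma card_Idx (r n : ℕ) (hr : 1 ≤ r) : Nat.card (Idx r n) = (n + r - 1).choose (r - 1) := by
  have e : Idx r n ≃ Sym (Fin r) n := (Sym.equivNatSumOfFintype (Fin r) n).symm
  rw [Nat.card_congr e, Nat.card_eq_fintype_card, Sym.card_sym_eq_choose, Fintype.card_fin,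
    add_comm r n, ← Nat.choose_symm_of_eq_add]
  omega

/-- shift of indices -/
def Idx.up {n : ℕ} (b : Idx r n) (i : Fin r) : Idx r (n+1) :=
  ⟨b.1 + Pi.single i 1, by simp [Finset.sum_add_distrib, b.2]⟩

/-- The differential. -/
def dd (u : Fin r → A) (n : ℕ) : (Idx r (n+1) → A) →ₗ[A] (Idx r n → A) where
  toFun f b := ∑ i, u i * f (b.up i)
  map_add' f g := by funext b; simp [mul_add, Finset.sum_add_distrib]
  map_smul' c f := by funext b; simp [Finset.mul_sum, mul_left_comm]

/-- extension by zero -/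
noncomputable def ext0 {n : ℕ} (f : Idx r n → A) (a : Fin r → ℕ) : A :=
  if h : ∑ i, a i = n then f ⟨a, h⟩ else 0

lemma dd_ext0 (u : Fin r → A) {n : ℕ} (f : Idx r (n+1) → A) :
    kd u (ext0 f) = ext0 (dd u n f) := by
  funext b
  by_cases h : ∑ i, b i = n
  · simp [kd, ext0, dd, Finset.sum_add_distrib, h, Idx.up]
  · simp [kd, ext0, Finset.sum_add_distrib, h]

lemma dd_restrict (u : Fin r → A) {n : ℕ} (g : (Fin r → ℕ) → A) (b : Idx r n) :
    dd u n (fun a => g a.1) b = kd u g b.1 := rfl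

lemma ext0_apply {n : ℕ} (f : Idx r n → A) (a : Idx r n) : ext0 f a.1 = f a := by
  simp [ext0, a.2]

lemma ext0_zero {n : ℕ} : ext0 (0 : Idx r n → A) = 0 := by
  funext b; simp [ext0]

lemma dd_dd (u : Fin r → A) (hu : ∀ i, u i * u i = 0) (n : ℕ) (f : Idx r (n+2) → A) :
    dd u n (dd u (n+1) f) = 0 := by
  funext b
  rw [← ext0_apply (dd u n (dd u (n+1) f)), ← dd_ext0, ← dd_ext0, kd_kd u hu]
  rfl

lemma dd_exact (u : Fin r → A) (hu : ∀ i, u i * u i = 0) (D : Fin r → A →+ A)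
    (hD : ∀ i j x, D i (u j * x) = (if i = j then x else 0) + u j * D i x)
    (n : ℕ) (f : Idx r (n+1) → A) (hf : dd u n f = 0) : ∃ g, dd u (n+1) g = f := by
  obtain ⟨g, hg⟩ := kd_exact u hu D hD (ext0 f) (by rw [dd_ext0, hf, ext0_zero])
    (by simp [ext0])
  refine ⟨fun a => g a.1, ?_⟩
  funext b
  rw [dd_restrict, hg, ext0_apply]

/-- The zero index. -/
def idx0 : Idx r 0 := ⟨0, by simp⟩

lemma eq_idx0 (a : Idx r 0) : a = idx0 := by
  apply Subtype.ext
  have := a.2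
  rw [Finset.sum_eq_zero_iff] at this
  funext i
  exact this i (Finset.mem_univ _)

lemma dd0_surj (u : Fin r → A) (f : Idx r 0 → A) (hf : f idx0 ∈ Ideal.span (Set.range u)) :
    ∃ g, dd u 0 g = f := by
  obtain ⟨c, hc⟩ := (Ideal.mem_span_range_iff_exists_fun).1 hf
  refine ⟨fun a => ∑ j, if a = idx0.up j then c j else 0, ?_⟩
  funext b
  obtain rfl := eq_idx0 b
  rw [← hc]
  have h : ∀ i j : Fin r, (idx0 : Idx r 0).up i = idx0.up j ↔ i = j := by
    intro i j
    refine ⟨fun h => ?_, fun h => h ▸ rfl⟩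
    have := congrFun (congrArg Subtype.val h) i
    by_contra hij
    simp [Idx.up, idx0, Pi.single_eq_of_ne hij] at this
  simp [dd, h, mul_comm]

end alg

section cat
variable {r : ℕ} {A : Type} [CommRing A] [CharP A 2]

/-- The complex. -/
noncomputable def cpx (u : Fin r → A) (hu : ∀ i, u i * u i = 0) : ChainComplex (ModuleCat.{0} A) ℕ :=
  ChainComplex.of (fun n => ModuleCat.of A (Idx r n → A)) (fun n => ModuleCat.ofHom (dd u n))
    (fun n => by
      ext1
      refine LinearMap.ext fun f => ?_
      exact dd_dd u hu n f)

lemma cpx_d (u : Fin r → A) (hu : ∀ i, u i * u i = 0) (n : ℕ) :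
    (cpx u hu).d (n+1) n = ModuleCat.ofHom (dd u n) :=
  ChainComplex.of_d (V := ModuleCat.{0} A) (fun n => ModuleCat.of A (Idx r n → A))
    (fun n => ModuleCat.ofHom (dd u n)) n

variable {k : Type} [AddCommGroup k] [Module A k]

/-- The augmentation of the complex. -/
noncomputable def aug (ε : A →ₗ[A] k) : (Idx r 0 → A) →ₗ[A] k := ε.comp (LinearMap.proj idx0)

/-- The resolution. -/
noncomputable def res (u : Fin r → A) (hu : ∀ i, u i * u i = 0) (D : Fin r → A →+ A)
    (hD : ∀ i j x, D i (u j * x) = (if i = j then x else 0) + u j * D i x)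
    (ε : A →ₗ[A] k) (hε : Function.Surjective ε)
    (hk : ∀ x, ε x = 0 ↔ x ∈ Ideal.span (Set.range u)) :
    ProjectiveResolution (ModuleCat.of A k) where
  complex := cpx u hu
  projective n := (IsProjective.iff_projective (R := A) (Idx r n → A)).1 inferInstance
  π := ((cpx u hu).toSingle₀Equiv _).symm ⟨ModuleCat.ofHom (aug ε), by
    rw [cpx_d]
    ext1
    ext1 f
    change ε (∑ i, u i * _) = 0
    rw [hk]
    refine Ideal.sum_mem _ fun i _ => Ideal.mul_mem_right _ _ (Ideal.subset_span ⟨i, rfl⟩)⟩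
  quasiIso := ⟨fun n => by
    cases n
    · rw [ChainComplex.quasiIsoAt₀_iff, ShortComplex.quasiIso_iff_of_zeros']
      · refine (ShortComplex.exact_and_epi_g_iff_of_iso
          (S₂ := ShortComplex.mk (ModuleCat.ofHom (dd u 0)) (ModuleCat.ofHom (aug ε)) ?_) ?_).2 ⟨?_, ?_⟩
        · ext1
          refine LinearMap.ext fun f => ?_
          change ε (∑ i, u i * _) = 0
          rw [hk]
          refine Ideal.sum_mem _ fun i _ => Ideal.mul_mem_right _ _ (Ideal.subset_span ⟨i, rfl⟩)
        · exact ShortComplex.isoMk (Iso.refl _) (Iso.refl _) (Iso.refl _)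
            (by
              refine (Category.id_comp _).trans (Eq.trans ?_ (Category.comp_id _).symm)
              exact (cpx_d u hu 0).symm)
            (by
              refine (Category.id_comp _).trans (Eq.trans ?_ (Category.comp_id _).symm)
              exact (ChainComplex.toSingle₀Equiv_symm_apply_f_zero (C := cpx u hu)
                (X := ModuleCat.of A k) (ModuleCat.ofHom (aug ε)) _).symm)
        · rw [ShortComplex.moduleCat_exact_iff]
          intro x hx
          exact dd0_surj u x ((hk _).1 hx)
        · rw [ModuleCat.epi_iff_surjective]
          intro x
          obtain ⟨y, rfl⟩ := hε x
          exact ⟨fun _ => y, rfl⟩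
      all_goals rfl
    · rename_i n
      rw [quasiIsoAt_iff_exactAt']
      · rw [HomologicalComplex.exactAt_iff' _ (n + 1 + 1) (n + 1) n (by simp) (by simp),
          ShortComplex.moduleCat_exact_iff]
        intro x hx
        change (cpx u hu).d (n+1) n x = 0 at hx
        rw [cpx_d] at hx
        change ∃ y, (cpx u hu).d (n+2) (n+1) y = x
        rw [cpx_d]
        exact dd_exact u hu D hD n x hx
      · apply ChainComplex.exactAt_succ_single_obj⟩

lemma ext_equiv [Linear (ZMod 2) (ModuleCat.{0} A)]
    (u : Fin r → A) (hu : ∀ i, u i * u i = 0) (D : Fin r → A →+ A)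
    (hD : ∀ i j x, D i (u j * x) = (if i = j then x else 0) + u j * D i x)
    (ε : A →ₗ[A] k) (hε : Function.Surjective ε)
    (hk : ∀ x, ε x = 0 ↔ x ∈ Ideal.span (Set.range u)) (n : ℕ) :
    Nonempty ((((Ext (ZMod 2) (ModuleCat.{0} A) n).obj (Opposite.op (ModuleCat.of A k))).obj
        (ModuleCat.of A k)) ≃+ (Idx r n → k)) := by
  have huk : ∀ i (x : k), u i • x = 0 := by
    intro i x
    obtain ⟨y, rfl⟩ := hε x
    rw [← map_smul, hk]
    exact Ideal.mul_mem_right _ _ (Ideal.subset_span ⟨i, rfl⟩)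
  let P := res u hu D hD ε hε hk
  let K := P.complex.linearYonedaObj (ZMod 2) (ModuleCat.of A k)
  have hd : ∀ i j, K.d i j = 0 := by
    intro i j
    by_cases h : i + 1 = j
    · subst h
      ext (g : ModuleCat.of A (Idx r i → A) ⟶ _)
      change (cpx u hu).d (i+1) i ≫ g = 0
      rw [cpx_d]
      ext1
      ext1 f
      change g.hom (dd u i f) = 0
      have : dd u i f = ∑ j, u j • (fun b => f (b.up j)) := by
        funext b
        simp [dd]
      rw [this, map_sum]
      simp only [map_smul]
      exact Finset.sum_eq_zero fun j _ => huk _ _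
    · exact K.shape _ _ h
  have e1 : K.homology n ≅ K.X n := by
    haveI := K.isIso_iCycles n _ rfl (hd _ _)
    haveI := K.isIso_homologyπ _ n rfl (hd _ _)
    exact (asIso (K.homologyπ n)).symm ≪≫ asIso (K.iCycles n)
  have e2 := (P.isoExt (R := ZMod 2) n (ModuleCat.of A k) ≪≫ e1).toLinearEquiv.toAddEquiv
  have e3 : K.X n ≃+ (ModuleCat.of A (Idx r n → A) ⟶ ModuleCat.of A k) := AddEquiv.refl _
  classical
  let : Fintype (Idx r n) := Fintype.ofFinite _
  have e4 : (ModuleCat.of A (Idx r n → A) ⟶ ModuleCat.of A k) ≃+ ((Idx r n → A) →ₗ[A] k) :=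
    ModuleCat.homAddEquiv
  have e5 : ((Idx r n → A) →ₗ[A] k) ≃+ (Idx r n → k) :=
    ((Pi.basisFun A (Idx r n)).constr A).symm.toAddEquiv
  exact ⟨e2.trans (e3.trans (e4.trans e5))⟩

end cat
end ExtF2

theorem ext_exterior_f2_dimension
    (r : ℕ) (hr : 1 ≤ r) (n : ℕ) :
    letI A := MvPolynomial (Fin r) (ZMod 2) ⧸
      Ideal.span (Set.range fun i : Fin r => (X i : MvPolynomial (Fin r) (ZMod 2)) ^ 2)
    letI φ : A →+* ZMod 2 := Ideal.Quotient.lift _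
      (MvPolynomial.eval (fun _ : Fin r => (0 : ZMod 2)))
      (fun a ha => by
        refine (Ideal.span_le.mpr ?_ :
          _ ≤ RingHom.ker (MvPolynomial.eval (fun _ : Fin r => (0 : ZMod 2)))) ha
        rintro x ⟨i, rfl⟩
        simp [RingHom.mem_ker])
    letI : Module A (ZMod 2) := Module.compHom (ZMod 2) φ
    Module.finrank (ZMod 2)
      (((Ext (ZMod 2) (ModuleCat A) n).obj (Opposite.op (ModuleCat.of A (ZMod 2)))).obj
        (ModuleCat.of A (ZMod 2))) = (n + r - 1).choose (r - 1) := by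
  let A := MvPolynomial (Fin r) (ZMod 2) ⧸
    Ideal.span (Set.range fun i : Fin r => (X i : MvPolynomial (Fin r) (ZMod 2)) ^ 2)
  let φ : A →+* ZMod 2 := Ideal.Quotient.lift _
    (MvPolynomial.eval (fun _ : Fin r => (0 : ZMod 2)))
    (fun a ha => by
      refine (Ideal.span_le.mpr ?_ :
        _ ≤ RingHom.ker (MvPolynomial.eval (fun _ : Fin r => (0 : ZMod 2)))) ha
      rintro x ⟨i, rfl⟩
      simp [RingHom.mem_ker])
  letI : Module A (ZMod 2) := Module.compHom (ZMod 2) φ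
  let I : Ideal (MvPolynomial (Fin r) (ZMod 2)) :=
    Ideal.span (Set.range fun i : Fin r => (X i : MvPolynomial (Fin r) (ZMod 2)) ^ 2)
  let q : MvPolynomial (Fin r) (ZMod 2) →+* A := Ideal.Quotient.mk I
  have hq : Function.Surjective q := Ideal.Quotient.mk_surjective
  have hφq : ∀ p, φ (q p) = MvPolynomial.eval (fun _ : Fin r => (0 : ZMod 2)) p := fun p => rfl
  let u : Fin r → A := fun i => q (X i)
  have hu : ∀ i, u i * u i = 0 := by
    intro i
    change q (X i) * q (X i) = 0
    rw [← map_mul, ← pow_two]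
    exact Ideal.Quotient.eq_zero_iff_mem.2 (Ideal.subset_span ⟨i, rfl⟩)
  haveI : Nontrivial A := φ.domain_nontrivial
  haveI : CharP A 2 := charP_of_injective_algebraMap (algebraMap (ZMod 2) A).injective 2
  have hI : ∀ i, ∀ p ∈ I, pderiv i p ∈ I := by
    intro i p hp
    induction hp using Submodule.span_induction with
    | mem x hx =>
      obtain ⟨j, rfl⟩ := hx
      have : pderiv i ((X j : MvPolynomial (Fin r) (ZMod 2)) ^ 2) = 0 := by
        rw [Derivation.leibniz_pow, two_nsmul]
        exact CharTwo.add_self_eq_zero _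
      simp only [this]
      exact I.zero_mem
    | zero => rw [map_zero]; exact I.zero_mem
    | add x y _ _ hx hy => rw [map_add]; exact I.add_mem hx hy
    | smul a x hx hx' =>
      rw [smul_eq_mul, Derivation.leibniz]
      exact I.add_mem (I.mul_mem_left _ hx') (I.mul_mem_right _ hx)
  let D : Fin r → A →+ A := fun i =>
    QuotientAddGroup.map I.toAddSubgroup I.toAddSubgroup 
      (pderiv (R := ZMod 2) i).toLinearMap.toAddMonoidHom (fun p hp => hI i p hp)
  have hDq : ∀ i p, D i (q p) = q (pderiv i p) := fun i p => rfl
  have hD : ∀ i j x, D i (u j * x) = (if i = j then x else 0) + u j * D i x := by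
    intro i j x
    obtain ⟨p, rfl⟩ := hq x
    change D i (q (X j) * q p) = _ + q (X j) * _
    rw [← map_mul, hDq, hDq, Derivation.leibniz, pderiv_X, map_add, smul_eq_mul, smul_eq_mul,
      map_mul, map_mul, add_comm]
    congr 1
    by_cases h : i = j
    · subst h; simp
    · simp [h, Pi.single_eq_of_ne (Ne.symm h)]
  let ε : A →ₗ[A] ZMod 2 :=
    { toFun := φ
      map_add' := map_add φ
      map_smul' := fun a x => map_mul φ a x }
  have hε : Function.Surjective ε := fun x => ⟨q (C x), by
    change φ (q (C x)) = x
    rw [hφq, eval_C]⟩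
  have hk : ∀ x, ε x = 0 ↔ x ∈ Ideal.span (Set.range u) := by
    intro x
    obtain ⟨p, rfl⟩ := hq x
    have h1 : Set.range u = q '' (Set.range X) := by
      rw [← Set.range_comp]; rfl
    constructor
    · intro h
      change φ (q p) = 0 at h
      rw [hφq] at h
      rw [h1, ← Ideal.map_span]
      apply Ideal.mem_map_of_mem
      rw [← Set.image_univ, mem_ideal_span_X_image]
      intro m hm
      by_contra! hcon
      have : m = 0 := by
        ext i; simpa using hcon i (Set.mem_univ _)
      subst this
      rw [mem_support_iff] at hm
      apply hm
      rw [← h, ← constantCoeff_eq, ← MvPolynomial.eval_zero]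
      rfl
    · intro h
      have h2 : Ideal.span (Set.range u) ≤ RingHom.ker φ := by
        rw [Ideal.span_le]
        rintro _ ⟨i, rfl⟩
        change φ (q (X i)) = 0
        rw [hφq, eval_X]
      exact h2 h
  obtain ⟨e⟩ := ExtF2.ext_equiv u hu D hD ε hε hk n
  have e' := LinearEquiv.ofBijective (e.toAddMonoidHom.toZModLinearMap 2) e.bijective
  refine e'.finrank_eq.trans ?_
  rw [← ExtF2.card_Idx r n hr]
  let : Fintype (ExtF2.Idx r n) := Fintype.ofFinite _
  rw [Module.finrank_fintype_fun_eq_card, Nat.card_eq_fintype_card]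
end
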